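/- Let E₂(q) = 1 − 24 Σ_{n=1}^∞ σ₁(n) qⁿ, and for |x| < 1 define D_y(x) = Σ_{r≥0} (2r+1) x^{16(2r+1)²} + Σ_{0≤r<s} (2r+2s+2) x^{16(2r+1)(2s+1)}. Then for every complex number x with |x| < 1, D_y(x) = − E₂(x^{16})/24 + E₂(x^{32})/8 − E₂(x^{64})/12. -/

import Mathlib

open scoped BigOperators

/-- The weight-2 Eisenstein series `E₂(q) = 1 − 24 Σ_{n=1}^∞ σ₁(n) qⁿ`. -/
noncomputable def E2 (q : ℂ) : ℂ :=
  1 - 24 * ∑' n : ℕ, (ArithmeticFunction.sigma 1 (n + 1) : ℂ) * q ^ (n + 1)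

/-- `D_y(x) = Σ_{r≥0} (2r+1) x^{16(2r+1)²} + Σ_{0≤r<s} (2r+2s+2) x^{16(2r+1)(2s+1)}`,
which is `x⁴·d_y(x)` for the coefficient `d_y` of `y⁴` in the open
Gromov–Witten potential of `ℙ¹_{2,4,4}`. -/
noncomputable def Dy (x : ℂ) : ℂ :=
  (∑' r : ℕ, (2 * (r : ℂ) + 1) * x ^ (16 * (2 * r + 1) ^ 2))
    + ∑' p : {p : ℕ × ℕ // p.1 < p.2},
        (2 * ((p : ℕ × ℕ).1 : ℂ) + 2 * ((p : ℕ × ℕ).2 : ℂ) + 2)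
          * x ^ (16 * (2 * (p : ℕ × ℕ).1 + 1) * (2 * (p : ℕ × ℕ).2 + 1))

noncomputable def GG (q : ℂ) (p : ℕ × ℕ) : ℂ := ((p.2 : ℂ) + 1) * q ^ ((p.1 + 1) * (p.2 + 1))

lemma GG_summable {q : ℂ} (hq : ‖q‖ < 1) : Summable (GG q) := by
  have h := summable_prod_mul_pow (𝕜 := ℂ) 1 hq
  rw [← (Equiv.prodCongr Equiv.pnatEquivNat.symm Equiv.pnatEquivNat.symm).summable_iff] at h
  refine h.congr fun p => ?_
  simp [GG, Equiv.pnatEquivNat]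

lemma E2_eq {q : ℂ} (hq : ‖q‖ < 1) : E2 q = 1 - 24 * ∑' p, GG q p := by
  have h := tsum_prod_pow_eq_tsum_sigma (𝕜 := ℂ) 1 hq
  rw [← (summable_prod_mul_pow (𝕜 := ℂ) 1 hq).tsum_prod
    (f := fun c : ℕ+ × ℕ+ => (c.2 : ℂ) ^ 1 * q ^ (c.1 * c.2 : ℕ)),
    tsum_pnat_eq_tsum_succ (f := fun n => (ArithmeticFunction.sigma 1 n : ℂ) * q ^ n),
    ← (Equiv.prodCongr Equiv.pnatEquivNat.symm Equiv.pnatEquivNat.symm).tsum_eq] at h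
  unfold E2
  rw [← h]
  congr 2
  refine tsum_congr fun p => ?_
  simp [GG, Equiv.pnatEquivNat]

lemma inj_fst_even : Function.Injective (fun p : ℕ × ℕ => (2 * p.1, p.2)) := by
  rintro ⟨a, b⟩ ⟨c, d⟩ h
  simp at h ⊢; omega

lemma inj_snd_even : Function.Injective (fun p : ℕ × ℕ => (p.1, 2 * p.2)) := by
  rintro ⟨a, b⟩ ⟨c, d⟩ h
  simp at h ⊢; omega

lemma inj_fst_odd : Function.Injective (fun p : ℕ × ℕ => (2 * p.1 + 1, p.2)) := by
  rintro ⟨a, b⟩ ⟨c, d⟩ h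
  simp at h ⊢; omega

lemma inj_snd_odd : Function.Injective (fun p : ℕ × ℕ => (p.1, 2 * p.2 + 1)) := by
  rintro ⟨a, b⟩ ⟨c, d⟩ h
  simp at h ⊢; omega

lemma split_fst {f : ℕ × ℕ → ℂ} (hf : Summable f) :
    ∑' p, f p = ∑' p : ℕ × ℕ, f (2 * p.1, p.2) + ∑' p : ℕ × ℕ, f (2 * p.1 + 1, p.2) := by
  have h1 : Summable fun p : ℕ × ℕ => f (2 * p.1, p.2) := hf.comp_injective inj_fst_even
  have h2 : Summable fun p : ℕ × ℕ => f (2 * p.1 + 1, p.2) := hf.comp_injective inj_fst_odd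
  rw [hf.tsum_prod, h1.tsum_prod, h2.tsum_prod]
  exact (tsum_even_add_odd (f := fun a => ∑' b, f (a, b)) h1.prod h2.prod).symm

lemma split_snd {f : ℕ × ℕ → ℂ} (hf : Summable f) :
    ∑' p, f p = ∑' p : ℕ × ℕ, f (p.1, 2 * p.2) + ∑' p : ℕ × ℕ, f (p.1, 2 * p.2 + 1) := by
  have h := split_fst (f := fun p => f p.swap) hf.prod_symm
  rw [← (Equiv.prodComm ℕ ℕ).tsum_eq f,
    ← (Equiv.prodComm ℕ ℕ).tsum_eq (fun p : ℕ × ℕ => f (p.1, 2 * p.2)),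
    ← (Equiv.prodComm ℕ ℕ).tsum_eq (fun p : ℕ × ℕ => f (p.1, 2 * p.2 + 1))]
  exact h

lemma split_diag {f : ℕ × ℕ → ℂ} (hf : Summable f) :
    ∑' p, f p = ∑' r : ℕ, f (r, r) +
      ∑' p : {p : ℕ × ℕ // p.1 < p.2}, (f p.1 + f p.1.swap) := by
  have hs : Summable fun p : ℕ × ℕ => f p.swap := hf.prod_symm
  have hadd : ∑' p : {p : ℕ × ℕ // p.1 < p.2}, (f p.1 + f p.1.swap) =
      ∑' p : {p : ℕ × ℕ // p.1 < p.2}, f p.1 + ∑' p : {p : ℕ × ℕ // p.1 < p.2}, f p.1.swap :=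
    Summable.tsum_add (hf.comp_injective Subtype.val_injective)
      (hs.comp_injective Subtype.val_injective)
  have key : ∀ p, f p = ({p : ℕ × ℕ | p.1 = p.2}.indicator f p +
      {p : ℕ × ℕ | p.1 < p.2}.indicator f p) + {p : ℕ × ℕ | p.2 < p.1}.indicator f p := by
    rintro ⟨a, b⟩
    rcases lt_trichotomy a b with h | h | h
    · simp [Set.indicator, h, h.ne, h.not_gt]
    · simp [Set.indicator, h]
    · simp [Set.indicator, h, h.ne', h.not_gt]
  rw [tsum_congr key, Summable.tsum_add ((hf.indicator _).add (hf.indicator _)) (hf.indicator _),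
    Summable.tsum_add (hf.indicator _) (hf.indicator _),
    hadd, add_assoc]
  congr 1
  · have hi : Function.Injective (fun r : ℕ => (r, r)) := fun a b h => by simpa using h
    rw [← hi.tsum_eq]
    · simp
    · rintro ⟨a, b⟩ h
      have : a = b := by
        by_contra hne
        simp [hne] at h
      exact ⟨a, by simp [this]⟩
  · congr 1
    · exact (tsum_subtype {p : ℕ × ℕ | p.1 < p.2} f).symm
    · rw [← (Equiv.prodComm ℕ ℕ).tsum_eq]
      exact (tsum_subtype {p : ℕ × ℕ | p.1 < p.2} (fun p => f p.swap)).symm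

lemma GG_odd_snd (q : ℂ) :
    ∑' p : ℕ × ℕ, GG q (p.1, 2 * p.2 + 1) = 2 * ∑' p, GG (q ^ 2) p := by
  rw [← tsum_mul_left]
  refine tsum_congr fun p => ?_
  simp only [GG, ← pow_mul]
  push_cast
  rw [show (p.1 + 1) * (2 * p.2 + 1 + 1) = 2 * ((p.1 + 1) * (p.2 + 1)) by ring]
  ring

lemma GG_odd_fst (q : ℂ) (p : ℕ × ℕ) :
    GG q (2 * p.1 + 1, 2 * p.2) = GG (q ^ 2) (p.1, 2 * p.2) := by
  simp only [GG, ← pow_mul]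
  rw [show (2 * p.1 + 1 + 1) * (2 * p.2 + 1) = 2 * ((p.1 + 1) * (2 * p.2 + 1)) by ring]

lemma Dy_eq {x : ℂ} (hq : ‖x ^ 16‖ < 1) :
    Dy x = ∑' p : ℕ × ℕ, GG (x ^ 16) (2 * p.1, 2 * p.2) := by
  have h1 : Summable fun p : ℕ × ℕ => GG (x ^ 16) (2 * p.1, 2 * p.2) :=
    (GG_summable hq).comp_injective (inj_fst_even.comp inj_snd_even)
  rw [split_diag h1]
  unfold Dy
  congr 1
  · refine tsum_congr fun r => ?_
    simp only [GG, ← pow_mul]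
    push_cast
    ring_nf
  · refine tsum_congr fun p => ?_
    simp only [GG, ← pow_mul, Prod.fst_swap, Prod.snd_swap]
    rw [mul_comm (2 * p.1.2 + 1) (2 * p.1.1 + 1), ← mul_assoc]
    push_cast
    ring

/-- `D_y(x) = −E₂(x¹⁶)/24 + E₂(x³²)/8 − E₂(x⁶⁴)/12` for `|x| < 1`. -/
theorem Dy_eq_eisenstein (x : ℂ) (hx : ‖x‖ < 1) :
    Dy x = -E2 (x ^ 16) / 24 + E2 (x ^ 32) / 8 - E2 (x ^ 64) / 12 := by
  have h16 : ‖x ^ 16‖ < 1 := by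
    rw [norm_pow]; exact pow_lt_one₀ (norm_nonneg _) hx (by norm_num)
  have e32 : x ^ 32 = (x ^ 16) ^ 2 := by ring
  have e64 : x ^ 64 = ((x ^ 16) ^ 2) ^ 2 := by ring
  rw [Dy_eq h16, e32, e64]
  generalize x ^ 16 = q at h16
  have hq2 : ‖q ^ 2‖ < 1 := by
    rw [norm_pow]; exact pow_lt_one₀ (norm_nonneg _) h16 (by norm_num)
  have hq4 : ‖(q ^ 2) ^ 2‖ < 1 := by
    rw [norm_pow]; exact pow_lt_one₀ (norm_nonneg _) hq2 (by norm_num)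
  rw [E2_eq h16, E2_eq hq2, E2_eq hq4]
  have a1 := split_snd (GG_summable h16)
  have a2 := split_snd (GG_summable hq2)
  have a3 := split_fst (f := fun p : ℕ × ℕ => GG q (p.1, 2 * p.2))
    ((GG_summable h16).comp_injective inj_snd_even)
  simp only [GG_odd_fst] at a3
  rw [GG_odd_snd] at a1 a2
  linear_combination a2 - a1 - a3
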